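/- For every integer k ≥ 0, with n = 2^{k+3}, there exist two trees T and T' of order n that are incomparable with respect to ⪯: neither T ⪯ T' nor T' ⪯ T holds. -/

import Mathlib

/-!
Write `G*` for the graph star `corona G`. An independent set of `G*` is an independent set `A` of
`G` together with any set of pendant vertices off `A`, so
`I(G*, x) = ∑_A x ^ |A| (1 + x) ^ (n - |A|)`, and the substitution `x = t / (1 - t)` turns this
into `I(G, t) / (1 - t) ^ n`. As `t ↦ t / (1 - t)` is an increasing bijection from `(-∞, 1)` onto
`(-1, ∞)` fixing `0`, it carries the largest root of `I(G, ·)` to that of `I(G*, ·)`, and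
`G* ⪯ H*` implies `G ⪯ H` for graphs of equal order. Graph stars of trees are trees of twice the
order, so one incomparable pair of trees on eight vertices yields all the others.
-/

open Polynomial SimpleGraph

/-- A finset of vertices is independent: pairwise nonadjacent. -/
def IsIndepFinset {V : Type*} (G : SimpleGraph V) (s : Finset V) : Prop :=
  ∀ u ∈ s, ∀ v ∈ s, ¬ G.Adj u v

open Classical in
/-- The independence polynomial of a finite graph, with real coefficients. -/
noncomputable def indepPoly {V : Type*} [Fintype V] (G : SimpleGraph V) : Polynomial ℝ :=
  ∑ s : Finset V, if IsIndepFinset G s then (X : Polynomial ℝ) ^ s.card else 0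

/-- `xi G` : the largest real root of the independence polynomial of `G`. -/
noncomputable def xi {V : Type*} [Fintype V] (G : SimpleGraph V) : ℝ :=
  sSup {x : ℝ | (indepPoly G).eval x = 0}

/-- `Pre H G` (`H ⪯ G`) : `I(H,x) ≥ I(G,x)` for all `x ∈ [ξ(G), 0]`. -/
def Pre {V W : Type*} [Fintype V] [Fintype W] (H : SimpleGraph W) (G : SimpleGraph V) : Prop :=
  ∀ x ∈ Set.Icc (xi G) 0, (indepPoly G).eval x ≤ (indepPoly H).eval x

/-- `SPre H G` (`H ≺ G`). -/
def SPre {V W : Type*} [Fintype V] [Fintype W] (H : SimpleGraph W) (G : SimpleGraph V) : Prop :=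
  Pre H G ∧ indepPoly H ≠ indepPoly G

open Classical in
/-- A graph is well-covered if all maximal independent sets have the same size. -/
def WellCovered {V : Type*} (G : SimpleGraph V) : Prop :=
  ∀ s t : Finset V,
    IsIndepFinset G s → (∀ v ∉ s, ¬ IsIndepFinset G (insert v s)) →
    IsIndepFinset G t → (∀ v ∉ t, ¬ IsIndepFinset G (insert v t)) →
    s.card = t.card

/-- A connected unicyclic graph: connected with as many edges as vertices. -/
def Unicyclic {V : Type*} [Fintype V] (G : SimpleGraph V) : Prop :=
  G.Connected ∧ G.edgeSet.ncard = Fintype.card V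

/-- The graph star (corona with `K₁`) of `G`: each vertex `inl v` gets a pendant
vertex `inr v`. -/
def corona {V : Type*} (G : SimpleGraph V) : SimpleGraph (V ⊕ V) :=
  SimpleGraph.fromRel (fun a b =>
    match a, b with
    | Sum.inl u, Sum.inl v => G.Adj u v
    | Sum.inl u, Sum.inr v => u = v
    | _, _ => False)

/-- `Ugraph n` (`U_n`, `n ≥ 3`): a triangle `0,1,2` with `n - 3` pendant vertices attached
to vertex `0`. -/
def Ugraph (n : ℕ) : SimpleGraph (Fin n) :=
  SimpleGraph.fromRel (fun i j => i.val = 0 ∨ (i.val = 1 ∧ j.val = 2))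

/-- `Dgraph n` (`D_n`, `n ≥ 4`): a path `0,1,...,n-1` plus the chord `{0,2}`, i.e. a
triangle with a path on `n - 3` vertices attached. -/
def Dgraph (n : ℕ) : SimpleGraph (Fin n) :=
  SimpleGraph.fromRel (fun i j => j.val = i.val + 1 ∨ (i.val = 0 ∧ j.val = 2))

/-- `starGraph n` (`S_n = K_{1,n-1}`): vertex `0` adjacent to all other vertices. -/
def starGraph (n : ℕ) : SimpleGraph (Fin n) :=
  SimpleGraph.fromRel (fun i _ => i.val = 0)

/-- `Mgraph n` (`M_n`, odd `n ≥ 5`): a triangle `0,1,2` with `(n-3)/2` paths of length two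
attached at vertex `0`; the middle vertices are the odd indices `3,5,...,n-2` and the leaf
attached to middle vertex `i` is `i + 1`. -/
def Mgraph (n : ℕ) : SimpleGraph (Fin n) :=
  SimpleGraph.fromRel (fun i j =>
    (i.val = 0 ∧ (j.val ≤ 2 ∨ j.val % 2 = 1)) ∨ (i.val = 1 ∧ j.val = 2) ∨
    (i.val % 2 = 1 ∧ 3 ≤ i.val ∧ j.val = i.val + 1))

/-- `SPgraph g k ℓ` (`G(g,k,ℓ)`, for `g ∈ {3,5}` and `k + ℓ ≥ 1`): a cycle on the vertices
`0,...,g-1`, a copy of `P_k*` on the vertices `g,...,g+2k-1` (path vertices at even offsets,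
each followed by its pendant vertex) joined to the cycle vertex `0` by an edge to the
path end `g`, and a copy of `P_ℓ*` on the vertices `g+2k,...,g+2k+2ℓ-1` joined to the cycle
vertex `2` by an edge to the path end `g+2k`. -/
def SPgraph (g k ℓ : ℕ) : SimpleGraph (Fin (g + 2*k + 2*ℓ)) :=
  SimpleGraph.fromRel (fun i j =>
    (i.val < g ∧ j.val < g ∧ (j.val = i.val + 1 ∨ (i.val = 0 ∧ j.val = g - 1))) ∨
    (i.val = 0 ∧ 0 < k ∧ j.val = g) ∨
    (g ≤ i.val ∧ i.val < g + 2*k ∧ (i.val - g) % 2 = 0 ∧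
      (j.val = i.val + 1 ∨ (j.val = i.val + 2 ∧ j.val < g + 2*k))) ∨
    (i.val = 2 ∧ 0 < ℓ ∧ j.val = g + 2*k) ∨
    (g + 2*k ≤ i.val ∧ (i.val - (g + 2*k)) % 2 = 0 ∧
      (j.val = i.val + 1 ∨ j.val = i.val + 2)))

/-- `Gtree n` (`G_{2n}`, `n ≥ 5`): the tree on `2n` vertices with path `v_1 … v_n` at
indices `0,…,n-1`, `z_1` at index `n`, `y_1, y_2` at `n+1, n+2`, `x_1, x_2` at `n+3, n+4`
(with `v_3 z_1`, `v_3 y_1`, `y_1 y_2`, `v_5 x_1`, `x_1 x_2` edges), and pendant vertices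
`w_j` at index `n + j - 1` attached to `v_j` for `6 ≤ j ≤ n`. -/
def Gtree (n : ℕ) : SimpleGraph (Fin (2*n)) :=
  SimpleGraph.fromRel (fun a b =>
    (a.val + 1 = b.val ∧ b.val < n) ∨
    (a.val = 2 ∧ (b.val = n ∨ b.val = n + 1)) ∨
    (a.val = n + 1 ∧ b.val = n + 2) ∨
    (a.val = 4 ∧ b.val = n + 3) ∨
    (a.val = n + 3 ∧ b.val = n + 4) ∨
    (5 ≤ a.val ∧ a.val < n ∧ b.val = n + a.val))

section IndepPoly

variable {V W V' W' : Type*} [Fintype V] [Fintype W] [Fintype V'] [Fintype W']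

open Classical in
lemma eval_indepPoly (G : SimpleGraph V) (x : ℝ) :
    (indepPoly G).eval x = ∑ s : Finset V, if IsIndepFinset G s then x ^ s.card else 0 := by
  simp only [indepPoly, eval_finsetSum, apply_ite (eval x), eval_pow, eval_X, eval_zero]

lemma isIndepFinset_empty {V : Type*} (G : SimpleGraph V) : IsIndepFinset G ∅ := by
  simp [IsIndepFinset]

lemma eval_zero_indepPoly (G : SimpleGraph V) : (indepPoly G).eval 0 = 1 := by
  classical
  rw [eval_indepPoly, Finset.sum_eq_single ∅ (fun s _ hs => by simp [hs]) (by simp)]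
  simp [isIndepFinset_empty]

lemma eval_indepPoly_pos (G : SimpleGraph V) {x : ℝ} (hx : 0 ≤ x) :
    0 < (indepPoly G).eval x := by
  classical
  rw [eval_indepPoly]
  refine Finset.sum_pos' (fun s _ => ?_) ⟨∅, Finset.mem_univ _, by simp [isIndepFinset_empty]⟩
  split_ifs <;> positivity

lemma indepPoly_congr {G : SimpleGraph V} {H : SimpleGraph W} (e : G ≃g H) :
    indepPoly G = indepPoly H := by
  classical
  refine Fintype.sum_equiv (Equiv.finsetCongr e.toEquiv) _ _ fun s => ?_
  have hindep : IsIndepFinset H (Equiv.finsetCongr e.toEquiv s) ↔ IsIndepFinset G s := by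
    simp only [IsIndepFinset, Equiv.finsetCongr_apply, Finset.forall_mem_map]
    exact forall₄_congr fun u _ v _ => not_congr e.map_adj_iff
  rw [if_congr hindep rfl rfl, Equiv.finsetCongr_apply, Finset.card_map]

lemma bddAbove_setOf_eval_indepPoly_eq_zero (G : SimpleGraph V) :
    BddAbove {x | (indepPoly G).eval x = 0} :=
  ⟨0, fun _ hx => le_of_not_gt fun hpos => (eval_indepPoly_pos G hpos.le).ne' hx⟩

lemma isGreatest_xi {G : SimpleGraph V} (hG : ∃ r, (indepPoly G).eval r = 0) :
    IsGreatest {x | (indepPoly G).eval x = 0} (xi G) :=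
  have hclosed : IsClosed {x | (indepPoly G).eval x = 0} :=
    isClosed_eq (indepPoly G).continuous continuous_const
  hclosed.isGreatest_csSup hG (bddAbove_setOf_eval_indepPoly_eq_zero G)

lemma xi_neg {G : SimpleGraph V} (hG : ∃ r, (indepPoly G).eval r = 0) : xi G < 0 :=
  lt_of_not_ge fun h => (eval_indepPoly_pos G h).ne' (isGreatest_xi hG).1

lemma xi_le_of_forall_eval_add_pos {G : SimpleGraph V} {x : ℝ}
    (hG : ∃ r, (indepPoly G).eval r = 0) (hx : ∀ t > 0, 0 < (indepPoly G).eval (x + t)) :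
    xi G ≤ x := by
  by_contra! hlt
  have hpos := hx (xi G - x) (sub_pos.mpr hlt)
  rw [add_sub_cancel] at hpos
  exact hpos.ne' (isGreatest_xi hG).1

lemma exists_eval_indepPoly_eq_zero {G : SimpleGraph V} {x : ℝ}
    (hx : (indepPoly G).eval x ≤ 0) : ∃ r, (indepPoly G).eval r = 0 :=
  intermediate_value_univ x 0 (indepPoly G).continuous ⟨hx, by simp [eval_zero_indepPoly]⟩

lemma pre_congr {G : SimpleGraph V} {H : SimpleGraph W} {G' : SimpleGraph V'}
    {H' : SimpleGraph W'} (e : G ≃g G') (f : H ≃g H') : Pre G H ↔ Pre G' H' := by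
  simp only [Pre, xi, indepPoly_congr e, indepPoly_congr f]

end IndepPoly

section DivOneSub

variable {K : Type*} [Field K] [LinearOrder K] [IsStrictOrderedRing K] {s t x : K}

lemma div_one_sub_le_div_one_sub_iff (hs : s < 1) (ht : t < 1) :
    s / (1 - s) ≤ t / (1 - t) ↔ s ≤ t := by
  rw [div_le_div_iff₀ (sub_pos.mpr hs) (sub_pos.mpr ht), mul_one_sub, mul_one_sub, mul_comm t s,
    sub_le_sub_iff_right]

lemma neg_one_lt_div_one_sub (ht : t < 1) : -1 < t / (1 - t) := by
  rw [lt_div_iff₀ (sub_pos.mpr ht)]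
  linarith

lemma exists_div_one_sub_eq (hx : -1 < x) : ∃ t < 1, t / (1 - t) = x := by
  have hpos : 0 < 1 + x := by linarith
  refine ⟨x / (1 + x), (div_lt_one hpos).mpr (by linarith), ?_⟩
  have hsub : 1 - x / (1 + x) = (1 + x)⁻¹ := by field_simp; ring
  rw [hsub, div_inv_eq_mul, div_mul_cancel₀ x hpos.ne']

end DivOneSub

section Corona

variable {V W : Type*} (G : SimpleGraph V)

@[simp]
lemma corona_adj_inl_inl (u v : V) : (corona G).Adj (Sum.inl u) (Sum.inl v) ↔ G.Adj u v := by
  simpa [corona, G.adj_comm v u] using fun h : G.Adj u v => h.ne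

@[simp]
lemma corona_adj_inl_inr (u v : V) : (corona G).Adj (Sum.inl u) (Sum.inr v) ↔ u = v := by
  simp [corona]

@[simp]
lemma corona_adj_inr_inl (u v : V) : (corona G).Adj (Sum.inr u) (Sum.inl v) ↔ u = v := by
  simp [corona, eq_comm]

@[simp]
lemma not_corona_adj_inr_inr (u v : V) : ¬ (corona G).Adj (Sum.inr u) (Sum.inr v) := by
  simp [corona]

lemma isIndepFinset_corona_disjSum (A B : Finset V) :
    IsIndepFinset (corona G) (A.disjSum B) ↔ IsIndepFinset G A ∧ Disjoint A B := by
  simp only [IsIndepFinset, Sum.forall, Finset.inl_mem_disjSum, Finset.inr_mem_disjSum,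
    corona_adj_inl_inl, corona_adj_inl_inr, corona_adj_inr_inl, not_corona_adj_inr_inr,
    Finset.disjoint_left]
  grind

variable [Fintype V] [Fintype W]

open Classical in
lemma indepPoly_corona : indepPoly (corona G) = ∑ A : Finset V,
    if IsIndepFinset G A then X ^ A.card * (1 + X) ^ (Fintype.card V - A.card) else 0 := by
  rw [indepPoly, ← Equiv.sum_comp (Finset.sumEquiv (α := V) (β := V)).symm.toEquiv,
    Fintype.sum_prod_type]
  refine Finset.sum_congr rfl fun A _ => ?_
  change (∑ B : Finset V, if IsIndepFinset (corona G) (A.disjSum B)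
    then (X : ℝ[X]) ^ (A.disjSum B).card else 0) = _
  simp only [isIndepFinset_corona_disjSum, Finset.card_disjSum, pow_add]
  split_ifs with hA
  · have hsum : ∑ B ∈ Aᶜ.powerset, (X : ℝ[X]) ^ B.card = (1 + X) ^ (Fintype.card V - A.card) := by
      simpa [add_comm, Finset.card_compl] using
        Finset.sum_pow_mul_eq_add_pow (X : ℝ[X]) 1 Aᶜ
    rw [← hsum, Finset.mul_sum, ← Finset.sum_filter]
    refine Finset.sum_congr (Finset.ext fun B => ?_) fun _ _ => rfl
    simp [hA, Finset.subset_compl_iff_disjoint_left]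
  · simp [hA]

lemma eval_indepPoly_corona_div_one_sub {t : ℝ} (ht : t ≠ 1) :
    (indepPoly (corona G)).eval (t / (1 - t)) =
      (indepPoly G).eval t / (1 - t) ^ Fintype.card V := by
  classical
  have h0 : 1 - t ≠ 0 := sub_ne_zero.mpr ht.symm
  have hadd : 1 + t / (1 - t) = (1 - t)⁻¹ := by field_simp; ring
  rw [indepPoly_corona, eval_indepPoly, eval_finsetSum, Finset.sum_div]
  refine Finset.sum_congr rfl fun A _ => ?_
  split_ifs
  · rw [eval_mul, eval_pow, eval_pow, eval_add, eval_one, eval_X, hadd, div_pow, inv_pow,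
      ← div_eq_mul_inv, div_div, ← pow_add, Nat.add_sub_cancel' A.card_le_univ]
  · simp

lemma eval_indepPoly_corona_div_one_sub_eq_zero_iff {t : ℝ} (ht : t < 1) :
    (indepPoly (corona G)).eval (t / (1 - t)) = 0 ↔ (indepPoly G).eval t = 0 := by
  have hpow : (1 - t) ^ Fintype.card V ≠ 0 := pow_ne_zero _ (sub_pos.mpr ht).ne'
  rw [eval_indepPoly_corona_div_one_sub G ht.ne, div_eq_zero_iff, or_iff_left hpow]

variable {G}

lemma xi_corona (hG : ∃ r, (indepPoly G).eval r = 0) :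
    xi (corona G) = xi G / (1 - xi G) := by
  have hlt : xi G < 1 := (xi_neg hG).trans one_pos
  obtain ⟨hroot, hmax⟩ := isGreatest_xi hG
  refine IsGreatest.csSup_eq
    ⟨(eval_indepPoly_corona_div_one_sub_eq_zero_iff G hlt).mpr hroot, fun y hy => ?_⟩
  obtain hy1 | hy1 := le_or_gt y (-1)
  · exact hy1.trans (neg_one_lt_div_one_sub hlt).le
  · obtain ⟨t, ht, rfl⟩ := exists_div_one_sub_eq hy1
    rw [div_one_sub_le_div_one_sub_iff ht hlt]
    exact hmax ((eval_indepPoly_corona_div_one_sub_eq_zero_iff G ht).mp hy)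

lemma Pre.of_corona {H : SimpleGraph W} (hcard : Fintype.card V = Fintype.card W)
    (h : Pre (corona G) (corona H)) : Pre G H := by
  rintro t ⟨hxit, ht0⟩
  by_cases hH : ∃ r, (indepPoly H).eval r = 0
  · have ht1 : t < 1 := ht0.trans_lt one_pos
    have hmem : t / (1 - t) ∈ Set.Icc (xi (corona H)) 0 := by
      rw [xi_corona hH, Set.mem_Icc,
        div_one_sub_le_div_one_sub_iff ((xi_neg hH).trans one_pos) ht1]
      exact ⟨hxit, div_nonpos_of_nonpos_of_nonneg ht0 (sub_pos.mpr ht1).le⟩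
    have hle := h _ hmem
    rwa [eval_indepPoly_corona_div_one_sub H ht1.ne, eval_indepPoly_corona_div_one_sub G ht1.ne,
      hcard, div_le_div_iff_of_pos_right (pow_pos (sub_pos.mpr ht1) _)] at hle
  -- Without a root `xi H` is the junk value `0`, and both polynomials take the value `1` there.
  · have hempty := Set.eq_empty_of_forall_notMem (not_exists.mp hH)
    have hxi : xi H = 0 := (congrArg sSup hempty).trans Real.sSup_empty
    obtain rfl : t = 0 := le_antisymm ht0 (hxi ▸ hxit)
    rw [eval_zero_indepPoly, eval_zero_indepPoly]

end Corona

section Trees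

variable {V : Type*}

lemma isTree_of_connected_of_ncard_edgeSet_lt [Finite V] {G : SimpleGraph V}
    (hG : G.Connected) (hcard : G.edgeSet.ncard < Nat.card V) : G.IsTree := by
  have hle := hG.card_vert_le_card_edgeSet_add_one
  rw [Nat.card_coe_set_eq] at hle
  rw [isTree_iff_connected_and_card, Nat.card_coe_set_eq]
  exact ⟨hG, by omega⟩

lemma connected_corona {G : SimpleGraph V} (hG : G.Connected) : (corona G).Connected := by
  obtain ⟨v₀⟩ := hG.nonempty
  let inlHom : G →g corona G := ⟨Sum.inl, (corona_adj_inl_inl G _ _).mpr⟩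
  have hinl (v : V) : (corona G).Reachable (Sum.inl v₀) (Sum.inl v) :=
    (hG.preconnected v₀ v).map inlHom
  refine (connected_iff_exists_forall_reachable _).mpr ⟨Sum.inl v₀, ?_⟩
  rintro (v | v)
  · exact hinl v
  · exact (hinl v).trans (Adj.reachable (by simp))

lemma edgeSet_corona (G : SimpleGraph V) : (corona G).edgeSet =
    Sym2.map Sum.inl '' G.edgeSet ∪ Set.range fun v => s(Sum.inl v, Sum.inr v) := by
  ext e
  induction e with | _ a b =>
  rcases a with a | a <;> rcases b with b | b <;>
    simp only [mem_edgeSet, corona_adj_inl_inl, corona_adj_inl_inr, corona_adj_inr_inl,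
      not_corona_adj_inr_inr, Set.mem_union, Set.mem_image, Set.mem_range, Sym2.exists,
      Sym2.map_mk, Sym2.eq_iff] <;>
    grind [G.adj_comm]

lemma isTree_corona [Finite V] {G : SimpleGraph V} (hG : G.IsTree) : (corona G).IsTree := by
  obtain ⟨hconn, hcard⟩ := isTree_iff_connected_and_card.mp hG
  have hinherited : (Sym2.map (Sum.inl : V → V ⊕ V) '' G.edgeSet).ncard + 1 ≤ Nat.card V := by
    rw [← hcard, Nat.card_coe_set_eq]
    exact Nat.add_le_add_right (Set.ncard_image_le G.edgeSet.toFinite) 1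
  have hpendant :
      (Set.range fun v : V => (s(Sum.inl v, Sum.inr v) : Sym2 (V ⊕ V))).ncard ≤ Nat.card V := by
    rw [← Set.image_univ, ← Set.ncard_univ]
    exact Set.ncard_image_le
  refine isTree_of_connected_of_ncard_edgeSet_lt (connected_corona hconn) ?_
  rw [edgeSet_corona, Nat.card_sum]
  have hunion := Set.ncard_union_le (Sym2.map (Sum.inl : V → V ⊕ V) '' G.edgeSet)
    (Set.range fun v : V => s(Sum.inl v, Sum.inr v))
  omega

/-- The graph in which every vertex is joined to its parent under `p`; a vertex that is its own
parent, such as the root of a rooted tree, contributes no edge. -/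
def parentGraph (p : V → V) : SimpleGraph V :=
  SimpleGraph.fromRel fun u v => p u = v

instance [DecidableEq V] (p : V → V) : DecidableRel (parentGraph p).Adj :=
  inferInstanceAs (DecidableRel (SimpleGraph.fromRel fun u v => p u = v).Adj)

lemma reachable_parentGraph_iterate (p : V → V) (v : V) (k : ℕ) :
    (parentGraph p).Reachable v (p^[k] v) := by
  induction k with
  | zero => rfl
  | succ k ih =>
    rw [Function.iterate_succ_apply']
    refine ih.trans ?_
    obtain hfix | hne := eq_or_ne (p^[k] v) (p (p^[k] v))
    · rw [← hfix]
    · exact Adj.reachable ⟨hne, Or.inl rfl⟩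

lemma isTree_parentGraph [Finite V] {p : V → V} {r : V} (hr : p r = r)
    (hp : ∀ v, ∃ k, p^[k] v = r) : (parentGraph p).IsTree := by
  have hconn : (parentGraph p).Connected := by
    refine (connected_iff_exists_forall_reachable _).mpr ⟨r, fun v => ?_⟩
    obtain ⟨k, rfl⟩ := hp v
    exact (reachable_parentGraph_iterate p v k).symm
  have hedge : (parentGraph p).edgeSet ⊆ (fun v => s(v, p v)) '' {r}ᶜ := by
    rintro ⟨u, v⟩ ⟨huv : u ≠ v, (hpu : p u = v) | (hpv : p v = u)⟩
    · exact ⟨u, fun hu : u = r => huv (by rw [← hpu, hu, hr]), congrArg (s(u, ·)) hpu⟩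
    · exact ⟨v, fun hv : v = r => huv (by rw [← hpv, hv, hr]),
        (congrArg (s(v, ·)) hpv).trans Sym2.eq_swap⟩
  refine isTree_of_connected_of_ncard_edgeSet_lt hconn ?_
  calc (parentGraph p).edgeSet.ncard
      ≤ ((fun v => s(v, p v)) '' {r}ᶜ).ncard := Set.ncard_le_ncard hedge
    _ ≤ ({r}ᶜ : Set V).ncard := Set.ncard_image_le
    _ < Nat.card V := by
      rw [← Set.ncard_univ]
      exact Set.ncard_lt_ncard (by simp [Set.ssubset_univ_iff])

end Trees

section IndepCount

variable {V : Type*} (G : SimpleGraph V) [DecidableRel G.Adj]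

instance : DecidablePred (IsIndepFinset G) :=
  fun s => inferInstanceAs (Decidable (∀ u ∈ s, ∀ v ∈ s, ¬ G.Adj u v))

variable [Fintype V]

/-- The number `i_k` of independent sets of size `k`; unlike a coefficient of `indepPoly`, it can
be evaluated. -/
def indepCount (k : ℕ) : ℕ :=
  ((Finset.univ.powersetCard k).filter (IsIndepFinset G)).card

lemma indepPoly_eq_sum_indepCount :
    indepPoly G = ∑ k : Fin (Fintype.card V + 1), (indepCount G k : ℝ[X]) * X ^ (k : ℕ) := by
  classical
  rw [← Finset.sum_range fun k => (indepCount G k : ℝ[X]) * X ^ k, indepPoly,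
    ← Finset.powerset_univ, Finset.sum_powerset, Finset.card_univ]
  refine Finset.sum_congr rfl fun k _ => ?_
  have hpow : ∀ s ∈ Finset.univ.powersetCard k,
      (if IsIndepFinset G s then (X : ℝ[X]) ^ s.card else 0) =
        if IsIndepFinset G s then X ^ k else 0 := fun s hs => by
    rw [(Finset.mem_powersetCard.mp hs).2]
  rw [indepCount, ← nsmul_eq_mul, ← Finset.sum_const, Finset.sum_filter,
    ← Finset.sum_congr rfl hpow]
  congr!

end IndepCount

section OrderEight

/-- The double broom of order eight: a path on the vertices `0`, `1`, `5` whose ends `0` and `5`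
carry three and two leaves. -/
abbrev doubleBroom : SimpleGraph (Fin 8) :=
  parentGraph ![0, 0, 0, 0, 0, 1, 5, 5]

/-- The spider of order eight: centre `0`, one leg of length one and three of length two. -/
abbrev spider : SimpleGraph (Fin 8) :=
  parentGraph ![0, 0, 0, 0, 0, 1, 2, 3]

lemma isTree_doubleBroom : doubleBroom.IsTree :=
  isTree_parentGraph (r := 0) rfl fun v => ⟨3, by revert v; decide⟩

lemma isTree_spider : spider.IsTree :=
  isTree_parentGraph (r := 0) rfl fun v => ⟨2, by revert v; decide⟩

lemma indepPoly_doubleBroom : indepPoly doubleBroom =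
    1 + 8 * X + 21 * X ^ 2 + 24 * X ^ 3 + 16 * X ^ 4 + 6 * X ^ 5 + X ^ 6 := by
  have hcount (k : Fin 9) : indepCount doubleBroom k = ![1, 8, 21, 24, 16, 6, 1, 0, 0] k := by
    decide +kernel +revert
  calc indepPoly doubleBroom
      = ∑ k : Fin 9, (indepCount doubleBroom k : ℝ[X]) * X ^ (k : ℕ) :=
        indepPoly_eq_sum_indepCount doubleBroom
    _ = _ := by simp [hcount, Fin.sum_univ_castSucc]

lemma indepPoly_spider : indepPoly spider = 1 + 8 * X + 21 * X ^ 2 + 23 * X ^ 3 + 9 * X ^ 4 := by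
  have hcount (k : Fin 9) : indepCount spider k = ![1, 8, 21, 23, 9, 0, 0, 0, 0] k := by
    decide +kernel +revert
  calc indepPoly spider
      = ∑ k : Fin 9, (indepCount spider k : ℝ[X]) * X ^ (k : ℕ) :=
        indepPoly_eq_sum_indepCount spider
    _ = _ := by simp [hcount, Fin.sum_univ_castSucc]

lemma xi_doubleBroom_le : xi doubleBroom ≤ -1 / 5 := by
  refine xi_le_of_forall_eval_add_pos (exists_eval_indepPoly_eq_zero (x := -1 / 4) ?_)
    fun t ht => ?_
  · rw [indepPoly_doubleBroom]
    norm_num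
  · rw [indepPoly_doubleBroom]
    -- All Taylor coefficients at `-1 / 5` are positive, for `spider` as well.
    simp only [eval_add, eval_mul, eval_pow, eval_X, eval_one, eval_ofNat]
    ring_nf
    positivity

lemma xi_spider_le : xi spider ≤ -1 / 5 := by
  refine xi_le_of_forall_eval_add_pos (exists_eval_indepPoly_eq_zero (x := -1 / 4) ?_)
    fun t ht => ?_
  · rw [indepPoly_spider]
    norm_num
  · rw [indepPoly_spider]
    simp only [eval_add, eval_mul, eval_pow, eval_X, eval_one, eval_ofNat]
    ring_nf
    positivity

lemma not_pre_doubleBroom_spider : ¬ Pre doubleBroom spider := by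
  intro h
  have hle := h (-1 / 10) ⟨by linarith [xi_spider_le], by norm_num⟩
  rw [indepPoly_spider, indepPoly_doubleBroom] at hle
  norm_num at hle

lemma not_pre_spider_doubleBroom : ¬ Pre spider doubleBroom := by
  intro h
  have hle := h (-1 / 5) ⟨xi_doubleBroom_le, by norm_num⟩
  rw [indepPoly_spider, indepPoly_doubleBroom] at hle
  norm_num at hle

end OrderEight

/-- For every `k ≥ 0`, with `n = 2^(k+3)`, there exist two trees of order `n`
that are incomparable with respect to `⪯`. -/
theorem stmt17 (k : ℕ) :
    ∃ (T T' : SimpleGraph (Fin (2 ^ (k + 3)))),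
      T.IsTree ∧ T'.IsTree ∧ ¬ Pre T T' ∧ ¬ Pre T' T := by
  induction k with
  | zero =>
    exact ⟨doubleBroom, spider, isTree_doubleBroom, isTree_spider, not_pre_doubleBroom_spider,
      not_pre_spider_doubleBroom⟩
  | succ k ih =>
    obtain ⟨T, T', hT, hT', hTT', hT'T⟩ := ih
    let e : Fin (2 ^ (k + 1 + 3)) ≃ Fin (2 ^ (k + 3)) ⊕ Fin (2 ^ (k + 3)) :=
      (finCongr (by ring)).trans finSumFinEquiv.symm
    let f := Iso.comap e (corona T)
    let f' := Iso.comap e (corona T')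
    refine ⟨(corona T).comap e, (corona T').comap e, f.isTree_iff.mpr (isTree_corona hT),
      f'.isTree_iff.mpr (isTree_corona hT'), ?_, ?_⟩
    · exact fun h => hTT' (.of_corona rfl ((pre_congr f f').mp h))
    · exact fun h => hT'T (.of_corona rfl ((pre_congr f' f).mp h))
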